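/- Let p ≥ 6, u = 2^(1−p), and let o_x, o_y ∈ [1, 1/(8u) − 2]. Let x_h, x_l, y_h, y_l ∈ F_p satisfy |x_l| ≤ o_x·u·|x_h| and |y_l| ≤ o_y·u·|y_h|, and let S = x_h + x_l + y_h + y_l. If sloppy double-word addition is executed with R = RD at every operation, then z_h + z_l ≤ S; if it is executed with R = RU at every operation, then z_h + z_l ≥ S. (The sign of the error is consistent with the rounding direction, even in the presence of moderate input overlap.) -/

import Mathlib

/-!
The argument is written for `RD`; the claim for `RU` follows from `RU x = -RD (-x)`.

Every operation rounds downward, so the final error has the right sign as soon as the two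
subtractions whose rounding would act in the wrong direction are exact, namely
`b' = s_h - a'` and `d = z_h - s_h`.

Both follow from `RD_add_sub_mem`, a form of the Fast2Sum exactness lemma: if `a` is a multiple
of `2^k`, `b` is a floating-point number of exponent at most `k`, and `|a + b| < 2^(p+k+1)`, then
`RD (a + b) - a` is a floating-point number. It covers the classical hypothesis `|b| ≤ |a|`.

* `b'` is always exact (`twoSum_exact`): by Fast2Sum if `|x_h| ≤ |y_h|` or
  `|y_h| ≤ |x_h + y_h|`, and otherwise because `x_h + y_h` is itself exact (`sterbenz`).
* `d` is exact by Fast2Sum when `|w| ≤ |s_h|`. If `|x_h + y_h|` exceeds `|x_h|` or `|y_h|`, there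
  is little cancellation and crude relative error bounds give `|w| ≤ |s_h|`. Otherwise
  `s_h = x_h + y_h` exactly, `s_l = 0` and `w = v`; the bound on the overlap gives
  `|w| ≤ 2^(p-1+k)`, where `2^k ℤ` is a grid carrying `x_h` and `y_h`, and `RD_add_sub_mem` applies.
-/

/-- The radix-2, precision-`p` floating-point numbers with unlimited exponent range. -/
def Fp (p : ℕ) : Set ℝ := {x : ℝ | ∃ M e : ℤ, |M| ≤ 2 ^ p - 1 ∧ x = (M : ℝ) * (2 : ℝ) ^ e}

/-- Round toward `-∞`: the largest floating-point number `≤ x`. -/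
noncomputable def RD (p : ℕ) (x : ℝ) : ℝ := sSup {f : ℝ | f ∈ Fp p ∧ f ≤ x}

/-- Round toward `+∞`: the smallest floating-point number `≥ x`. -/
noncomputable def RU (p : ℕ) (x : ℝ) : ℝ := sInf {f : ℝ | f ∈ Fp p ∧ x ≤ f}

/-- `y` is a faithful rounding of `x`. -/
def Faithful (p : ℕ) (x y : ℝ) : Prop := y = RD p x ∨ y = RU p x

/-- Sloppy double-word addition with rounding function `R`. -/
noncomputable def sloppyAdd (R : ℝ → ℝ) (xh xl yh yl : ℝ) : ℝ × ℝ :=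
  let sh := R (xh + yh)
  let a' := R (sh - yh)
  let b' := R (sh - a')
  let sl := R (R (xh - a') + R (yh - b'))
  let v := R (xl + yl)
  let w := R (sl + v)
  let zh := R (sh + w)
  let d := R (zh - sh)
  let zl := R (w - d)
  (zh, zl)

/-! ### Floating-point numbers -/

lemma Fp_neg {p : ℕ} {x : ℝ} (hx : x ∈ Fp p) : -x ∈ Fp p := by
  obtain ⟨M, e, hM, rfl⟩ := hx
  exact ⟨-M, e, by rwa [abs_neg], by push_cast; ring⟩

lemma Fp_abs {p : ℕ} {x : ℝ} (hx : x ∈ Fp p) : |x| ∈ Fp p := by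
  rcases abs_choice x with h | h <;> rw [h]
  · exact hx
  · exact Fp_neg hx

lemma Fp_zero (p : ℕ) : (0 : ℝ) ∈ Fp p :=
  ⟨0, 0, by simpa using one_le_pow₀ (n := p) (by norm_num : (1 : ℤ) ≤ 2), by simp⟩

/-- The bound `2 ^ p` is allowed, since `2 ^ p * 2 ^ n = 1 * 2 ^ (p + n)`. -/
lemma Fp_of_int {p : ℕ} (hp : 1 ≤ p) {N n : ℤ} (hN : |N| ≤ 2 ^ p) :
    (N : ℝ) * 2 ^ n ∈ Fp p := by
  have h2 : (2 : ℤ) ≤ 2 ^ p := by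
    simpa using pow_le_pow_right₀ (by norm_num : (1 : ℤ) ≤ 2) hp
  rcases hN.lt_or_eq with h | h
  · exact ⟨N, n, by omega, rfl⟩
  · have key : (2 : ℝ) ^ p * 2 ^ n = 2 ^ ((p : ℤ) + n) := by
      rw [zpow_add₀ two_ne_zero, zpow_natCast]
    rcases abs_eq (by positivity : (0 : ℤ) ≤ 2 ^ p) |>.1 h with h | h
    · exact ⟨1, p + n, by simp; omega, by rw [h]; push_cast; rw [key]; ring⟩
    · exact ⟨-1, p + n, by simp; omega, by rw [h]; push_cast; rw [neg_mul, key]; ring⟩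

lemma zpow_split {m n : ℤ} (h : m ≤ n) :
    ∃ c : ℕ, (2 : ℝ) ^ n = ((2 ^ c : ℤ) : ℝ) * 2 ^ m ∧ n = m + c := by
  obtain ⟨c, hc⟩ := Int.le.dest h
  refine ⟨c, ?_, hc.symm⟩
  rw [← hc, zpow_add₀ two_ne_zero, zpow_natCast]
  push_cast; ring

lemma two_mul_zpow_le {m n : ℤ} (h : m < n) : 2 * (2 : ℝ) ^ m ≤ 2 ^ n := by
  rw [mul_comm, ← zpow_add_one₀ two_ne_zero]
  exact zpow_le_zpow_right₀ (by norm_num) (by omega)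

lemma Fp_of_abs_le {p : ℕ} (hp : 1 ≤ p) {x : ℝ} {N n : ℤ} (hx : x = (N : ℝ) * 2 ^ n)
    (h : |x| ≤ 2 ^ p * 2 ^ n) : x ∈ Fp p := by
  rw [hx]
  apply Fp_of_int hp
  rw [hx, abs_mul, abs_of_pos (by positivity : (0 : ℝ) < 2 ^ n)] at h
  have := le_of_mul_le_mul_right h (by positivity)
  exact_mod_cast this

lemma abs_le_of_mantissa {p : ℕ} {M e : ℤ} (hM : |M| ≤ 2 ^ p - 1) :
    |(M : ℝ) * 2 ^ e| ≤ (2 ^ p - 1) * 2 ^ e := by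
  rw [abs_mul, abs_of_pos (by positivity : (0 : ℝ) < 2 ^ e)]
  have : |(M : ℝ)| ≤ 2 ^ p - 1 := by exact_mod_cast hM
  gcongr

/-- A floating-point number of moderate size can be written with an exponent at most `k`. -/
lemma Fp_reexpress {p : ℕ} {b : ℝ} {k : ℤ} (hb : b ∈ Fp p)
    (h : |b| ≤ (2 ^ p - 1) * 2 ^ k) :
    ∃ M m : ℤ, |M| ≤ 2 ^ p - 1 ∧ m ≤ k ∧ b = (M : ℝ) * 2 ^ m := by
  obtain ⟨M, m, hM, rfl⟩ := hb
  rcases le_total m k with hmk | hkm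
  · exact ⟨M, m, hM, hmk, rfl⟩
  · obtain ⟨c, hc, -⟩ := zpow_split hkm
    have e1 : (M : ℝ) * 2 ^ m = ((M * 2 ^ c : ℤ) : ℝ) * 2 ^ k := by
      rw [hc]; push_cast; ring
    refine ⟨M * 2 ^ c, k, ?_, le_rfl, e1⟩
    rw [e1, abs_mul, abs_of_pos (by positivity : (0 : ℝ) < 2 ^ k)] at h
    have := le_of_mul_le_mul_right h (by positivity)
    exact_mod_cast this

/-! ### Rounding downward -/

/-- `RD p t` is attained, and for `t ≠ 0` it is the floor of `t` on the grid `2 ^ n ℤ` of the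
binade `2 ^ (p - 1 + n) ≤ |t| < 2 ^ (p + n)`. -/
lemma RD_spec {p : ℕ} (hp : 1 ≤ p) (t : ℝ) :
    IsGreatest {f : ℝ | f ∈ Fp p ∧ f ≤ t} (RD p t) ∧
    (t ≠ 0 → ∃ n N : ℤ, (2 : ℝ) ^ p * 2 ^ n ≤ 2 * |t| ∧ |t| < 2 ^ p * 2 ^ n ∧
      RD p t = (N : ℝ) * 2 ^ n ∧ t - RD p t < 2 ^ n) := by
  rcases eq_or_ne t 0 with rfl | ht
  · have h : IsGreatest {f : ℝ | f ∈ Fp p ∧ f ≤ 0} 0 := ⟨⟨Fp_zero p, le_rfl⟩, fun f hf => hf.2⟩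
    refine ⟨?_, fun h => absurd rfl h⟩
    rw [RD, h.csSup_eq]; exact h
  obtain ⟨l, hl⟩ : ∃ l, l = Int.log 2 |t| := ⟨_, rfl⟩
  have htp : 0 < |t| := abs_pos.2 ht
  have hl1 : (2 : ℝ) ^ l ≤ |t| := by
    rw [hl]; exact_mod_cast Int.zpow_log_le_self (b := 2) (by norm_num) htp
  have hl2 : |t| < (2 : ℝ) ^ (l + 1) := by
    rw [hl]; exact_mod_cast Int.lt_zpow_succ_log_self (b := 2) (by norm_num) |t|
  obtain ⟨n, hn⟩ : ∃ n : ℤ, n = l + 1 - p := ⟨_, rfl⟩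
  have e1 : (2 : ℝ) ^ p * 2 ^ n = 2 ^ (l + 1) := by
    rw [← zpow_natCast, ← zpow_add₀ two_ne_zero]; congr 1; omega
  have e2 : (2 : ℝ) ^ (l + 1) = 2 * 2 ^ l := by rw [zpow_add_one₀ two_ne_zero]; ring
  have b1 : (2 : ℝ) ^ p * 2 ^ n ≤ 2 * |t| := by linarith
  have b2 : |t| < 2 ^ p * 2 ^ n := by linarith
  have hpos : (0 : ℝ) < 2 ^ n := by positivity
  obtain ⟨N, hN⟩ : ∃ N, N = ⌊t / 2 ^ n⌋ := ⟨_, rfl⟩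
  have f1 : (N : ℝ) * 2 ^ n ≤ t := by
    rw [← le_div_iff₀ hpos, hN]; exact Int.floor_le _
  have f2 : t < (N + 1 : ℝ) * 2 ^ n := by
    rw [← div_lt_iff₀ hpos, hN]; exact Int.lt_floor_add_one _
  have f3 : ∀ K : ℤ, (K : ℝ) * 2 ^ n ≤ t → K ≤ N := by
    intro K hK
    rw [hN]; exact Int.le_floor.2 (by rwa [le_div_iff₀ hpos])
  have hNabs : |N| ≤ 2 ^ p := by
    rw [abs_le]
    constructor
    · apply f3; push_cast; linarith [neg_abs_le t]
    · have : (N : ℝ) * 2 ^ n < 2 ^ p * 2 ^ n := by linarith [le_abs_self t]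
      have := lt_of_mul_lt_mul_right this hpos.le
      exact le_of_lt (by exact_mod_cast this)
  have hG : IsGreatest {f : ℝ | f ∈ Fp p ∧ f ≤ t} ((N : ℝ) * 2 ^ n) := by
    refine ⟨⟨Fp_of_int hp hNabs, f1⟩, ?_⟩
    rintro f ⟨⟨M, e, hM, rfl⟩, hft⟩
    rcases le_or_gt n e with hne | hen
    · obtain ⟨c, hc, -⟩ := zpow_split hne
      rw [hc, ← mul_assoc] at hft ⊢
      have : M * 2 ^ c ≤ N := f3 _ (by push_cast at hft ⊢; exact hft)
      have : (M : ℝ) * ((2 ^ c : ℤ) : ℝ) ≤ N := by exact_mod_cast this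
      gcongr
    · -- a number of smaller exponent is strictly below the binade of `t` in absolute value
      have h1 := abs_le_of_mantissa (e := e) hM
      have h2 := two_mul_zpow_le hen
      have h3 : (2 : ℝ) ^ p * (2 * 2 ^ e) ≤ 2 ^ p * 2 ^ n := by gcongr
      have h4 : (0 : ℝ) < 2 ^ e := by positivity
      have h5 : |(M : ℝ) * 2 ^ e| < |t| := by linarith
      have ht0 : 0 < t := by
        by_contra hcon
        rw [abs_of_nonpos (not_lt.1 hcon)] at h5
        linarith [neg_abs_le ((M : ℝ) * 2 ^ e)]
      rw [abs_of_pos ht0] at b1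
      obtain ⟨q, rfl⟩ := Nat.exists_eq_add_of_le' hp
      have h6 : (2 ^ q : ℤ) ≤ N := by
        apply f3; push_cast; rw [pow_succ] at b1; linarith
      have h7 : (2 : ℝ) ^ q ≤ N := by exact_mod_cast h6
      have h8 : (2 : ℝ) ^ q * 2 ^ n ≤ N * 2 ^ n := by gcongr
      have h9 : (2 : ℝ) ^ (q + 1) * 2 ^ n = 2 * (2 ^ q * 2 ^ n) := by ring
      linarith [le_abs_self ((M : ℝ) * 2 ^ e)]
  have hR : RD p t = (N : ℝ) * 2 ^ n := hG.csSup_eq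
  rw [hR]
  exact ⟨hG, fun _ => ⟨n, N, b1, b2, rfl, by linarith⟩⟩

section
variable {p : ℕ}

lemma RD_mem (hp : 1 ≤ p) (t : ℝ) : RD p t ∈ Fp p := (RD_spec hp t).1.1.1

lemma RD_le (hp : 1 ≤ p) (t : ℝ) : RD p t ≤ t := (RD_spec hp t).1.1.2

lemma le_RD (hp : 1 ≤ p) {t f : ℝ} (hf : f ∈ Fp p) (h : f ≤ t) : f ≤ RD p t :=
  (RD_spec hp t).1.2 ⟨hf, h⟩

lemma RD_eq (hp : 1 ≤ p) {t : ℝ} (ht : t ∈ Fp p) : RD p t = t :=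
  le_antisymm (RD_le hp t) (le_RD hp ht le_rfl)

lemma abs_RD_le (hp : 1 ≤ p) {t f : ℝ} (hf : f ∈ Fp p) (h : |t| ≤ f) : |RD p t| ≤ f := by
  rw [abs_le] at h ⊢
  exact ⟨le_RD hp (Fp_neg hf) h.1, (RD_le hp t).trans h.2⟩

lemma le_abs_RD (hp : 1 ≤ p) {t f : ℝ} (hf : f ∈ Fp p) (h : f ≤ |t|) : f ≤ |RD p t| := by
  rcases le_abs.1 h with h | h
  · exact (le_RD hp hf h).trans (le_abs_self _)
  · exact (by linarith [RD_le hp t] : f ≤ -RD p t).trans (neg_le_abs _)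

lemma RD_error (hp : 1 ≤ p) {u : ℝ} (hu : u * 2 ^ p = 2) (t : ℝ) :
    |t - RD p t| ≤ u * |t| := by
  have h0 := RD_le hp t
  rw [abs_of_nonneg (by linarith)]
  rcases eq_or_ne t 0 with rfl | ht
  · rw [RD_eq hp (Fp_zero p)]; simp
  obtain ⟨n, N, h1, -, -, h2⟩ := (RD_spec hp t).2 ht
  have hupos : 0 < u := by
    by_contra h
    have : u * (2 : ℝ) ^ p ≤ 0 := mul_nonpos_of_nonpos_of_nonneg (not_lt.1 h) (by positivity)
    linarith
  have h3 : u * (2 ^ p * 2 ^ n) ≤ u * (2 * |t|) := by gcongr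
  rw [← mul_assoc, hu] at h3
  linarith

lemma RU_eq_neg_RD (p : ℕ) (x : ℝ) : RU p x = -RD p (-x) := by
  rw [RU, RD, ← Real.sInf_neg]
  congr 1
  ext f
  constructor
  · rintro ⟨h1, h2⟩
    exact ⟨Fp_neg h1, by linarith⟩
  · rintro ⟨h1, h2⟩
    exact ⟨by simpa using Fp_neg h1, by linarith⟩

/-! ### Exact operations -/

/-- Generalized Fast2Sum exactness: the exponent `n` of the rounded sum is at most `k + 1`. For
`n ≤ k` the difference lives on the grid `2 ^ n ℤ`, for `n = k + 1` on `2 ^ k ℤ`, and in both cases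
it is close enough to `b` to be representable there. -/
lemma RD_add_sub_mem (hp : 2 ≤ p) {A M k m : ℤ} (hM : |M| ≤ 2 ^ p - 1) (hmk : m ≤ k)
    {a b : ℝ} (ha : a = (A : ℝ) * 2 ^ k) (hb : b = (M : ℝ) * 2 ^ m)
    (hab : |a + b| < 2 * (2 ^ p * 2 ^ k)) : RD p (a + b) - a ∈ Fp p := by
  have hp1 : 1 ≤ p := by omega
  have hbF : b ∈ Fp p := ⟨M, m, hM, hb⟩
  have hbabs : |b| ≤ (2 ^ p - 1) * 2 ^ m := by rw [hb]; exact abs_le_of_mantissa hM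
  rcases eq_or_ne (a + b) 0 with h0 | h0
  · rw [h0, RD_eq hp1 (Fp_zero p)]
    convert hbF using 1; linarith
  obtain ⟨n, N, h1, h2, hN, h3⟩ := (RD_spec hp1 (a + b)).2 h0
  have h4 := RD_le hp1 (a + b)
  obtain ⟨z, hz⟩ : ∃ z, z = RD p (a + b) := ⟨_, rfl⟩
  rw [← hz] at hN h3 h4 ⊢
  have hp4 : (4 : ℝ) ≤ 2 ^ p := by
    simpa [show (2 : ℝ) ^ 2 = 4 by norm_num] using
      pow_le_pow_right₀ (by norm_num : (1 : ℝ) ≤ 2) hp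
  have hnk : n ≤ k + 1 := by
    have h5 : (2 : ℝ) ^ p * 2 ^ n < 2 ^ p * (2 ^ (k + 2)) := by
      rw [zpow_add₀ two_ne_zero, show (2 : ℝ) ^ (2 : ℤ) = 4 by norm_num]; linarith
    have := (zpow_lt_zpow_iff_right₀ (by norm_num : (1 : ℝ) < 2)).1
      (lt_of_mul_lt_mul_left h5 (by positivity))
    omega
  -- the difference falls short of `b` by less than one grid step
  have hdist : |z - a| ≤ |b| + 2 ^ n := by
    rw [abs_le]
    constructor <;> linarith [neg_abs_le b, le_abs_self b,
      (by positivity : (0 : ℝ) < 2 ^ n)]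
  have hnpos : (0 : ℝ) < 2 ^ n := by positivity
  have hmpos : (0 : ℝ) < 2 ^ m := by positivity
  have hkpos : (0 : ℝ) < 2 ^ k := by positivity
  rcases le_or_gt n m with hnm | hmn
  · -- the sum lies on the grid of its own rounding, so it is exact
    obtain ⟨c, hc, -⟩ := zpow_split hnm
    obtain ⟨d, hd, -⟩ := zpow_split (hnm.trans hmk)
    have e : a + b - z = ((A * 2 ^ d + M * 2 ^ c - N : ℤ) : ℝ) * 2 ^ n := by
      rw [ha, hb, hN, hc, hd]; push_cast; ring
    have l1 : ((A * 2 ^ d + M * 2 ^ c - N : ℤ) : ℝ) < 1 := by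
      refine lt_of_mul_lt_mul_right ?_ hnpos.le; rw [← e]; linarith
    have l2 : (0 : ℝ) ≤ ((A * 2 ^ d + M * 2 ^ c - N : ℤ) : ℝ) := by
      refine le_of_mul_le_mul_right ?_ hnpos; rw [← e]; linarith
    have l3 : A * 2 ^ d + M * 2 ^ c - N = 0 := by
      have l1' : A * 2 ^ d + M * 2 ^ c - N < 1 := by exact_mod_cast l1
      have l2' : 0 ≤ A * 2 ^ d + M * 2 ^ c - N := by exact_mod_cast l2
      omega
    rw [l3] at e
    convert hbF using 1
    simp at e; linarith
  rcases le_or_gt n k with hnk' | hkn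
  · obtain ⟨d, hd, -⟩ := zpow_split hnk'
    apply Fp_of_abs_le hp1 (N := N - A * 2 ^ d) (n := n)
    · rw [ha, hN, hd]; push_cast; ring
    · have h5 : (2 : ℝ) ^ p * (2 * 2 ^ m) ≤ 2 ^ p * 2 ^ n := by
        gcongr; exact two_mul_zpow_le hmn
      nlinarith
  · obtain rfl : n = k + 1 := by omega
    have hk1 : (2 : ℝ) ^ (k + 1) = 2 * 2 ^ k := by rw [zpow_add_one₀ two_ne_zero]; ring
    rw [hk1] at hN h3 hdist
    apply Fp_of_abs_le hp1 (N := 2 * N - A) (n := k)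
    · rw [ha, hN]; push_cast; ring
    · rcases hmk.lt_or_eq with hlt | rfl
      · have h5 : (2 : ℝ) ^ p * (2 * 2 ^ m) ≤ 2 ^ p * 2 ^ k := by
          gcongr; exact two_mul_zpow_le hlt
        nlinarith
      · -- the rounding error is a multiple of `2 ^ k` below `2 * 2 ^ k`, hence at most `2 ^ k`
        have e : a + b - z = ((A + M - 2 * N : ℤ) : ℝ) * 2 ^ m := by
          rw [ha, hb, hN]; push_cast; ring
        have l1 : ((A + M - 2 * N : ℤ) : ℝ) < 2 := by
          refine lt_of_mul_lt_mul_right ?_ hmpos.le; rw [← e]; linarith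
        have l2 : A + M - 2 * N ≤ 1 := by
          have : A + M - 2 * N < 2 := by exact_mod_cast l1
          omega
        have l3 : ((A + M - 2 * N : ℤ) : ℝ) ≤ 1 := by exact_mod_cast l2
        have l4 : a + b - z ≤ 2 ^ m := by
          rw [e]; nlinarith
        rw [abs_le]
        constructor <;> linarith [neg_abs_le b, le_abs_self b]

lemma fast2Sum_mem (hp : 2 ≤ p) {a b : ℝ} (ha : a ∈ Fp p) (hb : b ∈ Fp p) (h : |b| ≤ |a|) :
    RD p (a + b) - a ∈ Fp p := by
  obtain ⟨A, k, hA, hak⟩ := ha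
  have h1 : |a| ≤ (2 ^ p - 1) * 2 ^ k := by rw [hak]; exact abs_le_of_mantissa hA
  obtain ⟨M, m, hM, hmk, hbm⟩ := Fp_reexpress hb (h.trans h1)
  refine RD_add_sub_mem hp hM hmk hak hbm ?_
  have : (0 : ℝ) < 2 ^ k := by positivity
  linarith [abs_add_le a b]

/-- Under cancellation, both operands lie on a common grid `2 ^ k ℤ` coarse enough for the sum to
be representable, and the operands are not much larger than the numbers of exponent `k`. -/
lemma cancel_grid {x y : ℝ} (hx : x ∈ Fp p) (hy : y ∈ Fp p)
    (h1 : |x + y| ≤ |x|) (h2 : |x + y| ≤ |y|) :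
    ∃ A k : ℤ, x + y = (A : ℝ) * 2 ^ k ∧ |x + y| ≤ (2 ^ p - 1) * 2 ^ k ∧
      |x| + |y| ≤ 3 * ((2 ^ p - 1) * 2 ^ k) := by
  obtain ⟨X, i, hX, hxi⟩ := hx
  obtain ⟨Y, j, hY, hyj⟩ := hy
  have bx : |x| ≤ (2 ^ p - 1) * 2 ^ i := by rw [hxi]; exact abs_le_of_mantissa hX
  have bY : |y| ≤ (2 ^ p - 1) * 2 ^ j := by rw [hyj]; exact abs_le_of_mantissa hY
  have t1 : |x| ≤ |x + y| + |y| := by simpa using abs_sub (x + y) y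
  have t2 : |y| ≤ |x + y| + |x| := by simpa using abs_sub (x + y) x
  rcases le_total i j with hij | hij
  · obtain ⟨c, hc, -⟩ := zpow_split hij
    refine ⟨X + Y * 2 ^ c, i, ?_, by linarith, by linarith⟩
    rw [hxi, hyj, hc]; push_cast; ring
  · obtain ⟨c, hc, -⟩ := zpow_split hij
    refine ⟨X * 2 ^ c + Y, j, ?_, by linarith, by linarith⟩
    rw [hxi, hyj, hc]; push_cast; ring

lemma sterbenz (hp : 1 ≤ p) {x y : ℝ} (hx : x ∈ Fp p) (hy : y ∈ Fp p)
    (h1 : |x + y| ≤ |x|) (h2 : |x + y| ≤ |y|) : x + y ∈ Fp p := by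
  obtain ⟨A, k, hA, hb, -⟩ := cancel_grid hx hy h1 h2
  refine Fp_of_abs_le hp hA (hb.trans ?_)
  have : (0 : ℝ) < 2 ^ k := by positivity
  linarith

/-- In 2Sum with downward rounding, the subtraction `b' = s_h - a'` is exact. -/
lemma twoSum_exact (hp : 2 ≤ p) {x y : ℝ} (hx : x ∈ Fp p) (hy : y ∈ Fp p) :
    RD p (x + y) - RD p (RD p (x + y) - y) ∈ Fp p := by
  have hp1 : 1 ≤ p := by omega
  rcases le_total |x| |y| with h | h
  · have h1 := fast2Sum_mem hp hy hx h
    rw [add_comm y x] at h1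
    rw [RD_eq hp1 h1]; simpa using hy
  rcases le_total |y| |x + y| with h' | h'
  · have h1 := le_abs_RD hp1 (Fp_abs hy) h'
    have h2 := fast2Sum_mem hp (RD_mem hp1 (x + y)) (Fp_neg hy) (by rwa [abs_neg])
    rw [← sub_eq_add_neg] at h2
    simpa using Fp_neg h2
  · rw [RD_eq hp1 (sterbenz hp1 hx hy (h'.trans h) h')]
    simp only [add_sub_cancel_right]
    rw [RD_eq hp1 hx]; simpa using hy

/-! ### Sloppy addition -/

/-- Without strong cancellation in `x_h + y_h`, the correction `w` does not exceed `s_h`. -/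
lemma abs_w_le (hp : 1 ≤ p) {u : ℝ} (hu : u * 2 ^ p = 2) (hu1 : u ≤ 1 / 32)
    {x y l sh a b sl v : ℝ}
    (hT : |x| < |x + y| ∨ |y| < |x + y|) (hl : |l| ≤ 1 / 8 * (|x| + |y|))
    (hsh : sh = RD p (x + y)) (ha : a = RD p (sh - y)) (hb : b = sh - a)
    (hsl : sl = RD p (RD p (x - a) + RD p (y - b))) (hv : v = RD p l) :
    |RD p (sl + v)| ≤ |sh| := by
  have t1 : |x| ≤ |x + y| + |y| := by simpa using abs_sub (x + y) y
  have t2 : |y| ≤ |x + y| + |x| := by simpa using abs_sub (x + y) x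
  obtain ⟨T, hTd⟩ : ∃ T, T = |x + y| := ⟨_, rfl⟩
  rw [← hTd] at t1 t2 hT
  have hT0 : 0 ≤ T := by rw [hTd]; positivity
  have hx2 : |x| ≤ 2 * T := by rcases hT with h | h <;> linarith
  have hH : |x| + |y| ≤ 3 * T := by rcases hT with h | h <;> linarith
  have err : ∀ t, |t - RD p t| ≤ 1 / 32 * |t| := fun t =>
    (RD_error hp hu t).trans (by gcongr)
  have mag : ∀ t, |RD p t| ≤ 33 / 32 * |t| := fun t => by
    have h1 := err t
    have h2 := abs_sub t (t - RD p t)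
    rw [sub_sub_cancel] at h2
    linarith
  have e1 : |x + y - sh| ≤ 1 / 32 * T := by rw [hsh, hTd]; exact err _
  have e2 : |sh - y - a| ≤ 1 / 32 * |sh - y| := by rw [ha]; exact err _
  have e3 : |sh - y| ≤ |x| + |x + y - sh| := by
    have := abs_sub x (x + y - sh)
    rwa [show x - (x + y - sh) = sh - y by ring] at this
  have e4 : |x - a| ≤ |x + y - sh| + |sh - y - a| := by
    have := abs_add_le (x + y - sh) (sh - y - a)
    rwa [show x + y - sh + (sh - y - a) = x - a by ring] at this
  have e5 : |y - b| = |sh - y - a| := by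
    rw [hb, ← abs_neg]; congr 1; ring
  have e6 : |sl| ≤ 33 / 32 * (|RD p (x - a)| + |RD p (y - b)|) := by
    rw [hsl]; refine (mag _).trans ?_
    gcongr; exact abs_add_le _ _
  have e7 := mag (x - a)
  have e8 := mag (y - b)
  have e9 : |v| ≤ 33 / 32 * |l| := by rw [hv]; exact mag _
  have e10 := mag (sl + v)
  have e11 := abs_add_le sl v
  have e12 : T ≤ |sh| + |x + y - sh| := by
    have := abs_add_le sh (x + y - sh)
    rwa [add_sub_cancel, ← hTd] at this
  linarith

/-- The error sign for downward rounding. -/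
lemma sloppy_RD (hp : 6 ≤ p) {u : ℝ} (hu : u * 2 ^ p = 2) (hu1 : u ≤ 1 / 32)
    {xh xl yh yl : ℝ} (hxh : xh ∈ Fp p) (hyh : yh ∈ Fp p)
    (hl : |xl + yl| ≤ 1 / 8 * (|xh| + |yh|)) :
    (sloppyAdd (RD p) xh xl yh yl).1 + (sloppyAdd (RD p) xh xl yh yl).2 ≤
      xh + xl + yh + yl := by
  have hp1 : 1 ≤ p := by omega
  have hp2 : 2 ≤ p := by omega
  simp only [sloppyAdd]
  have hbF := twoSum_exact hp2 hxh hyh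
  obtain ⟨sh, hsh⟩ : ∃ s, s = RD p (xh + yh) := ⟨_, rfl⟩
  rw [← hsh] at hbF ⊢
  obtain ⟨a, ha⟩ : ∃ s, s = RD p (sh - yh) := ⟨_, rfl⟩
  rw [← ha] at hbF ⊢
  rw [RD_eq hp1 hbF]
  obtain ⟨b, hb⟩ : ∃ b, b = sh - a := ⟨_, rfl⟩
  rw [← hb]
  obtain ⟨sl, hsl⟩ : ∃ s, s = RD p (RD p (xh - a) + RD p (yh - b)) := ⟨_, rfl⟩
  obtain ⟨v, hv⟩ : ∃ s, s = RD p (xl + yl) := ⟨_, rfl⟩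
  rw [← hsl, ← hv]
  obtain ⟨w, hw⟩ : ∃ s, s = RD p (sl + v) := ⟨_, rfl⟩
  rw [← hw]
  have hshF : sh ∈ Fp p := hsh ▸ RD_mem hp1 _
  have hwF : w ∈ Fp p := hw ▸ RD_mem hp1 _
  have hvF : v ∈ Fp p := hv ▸ RD_mem hp1 _
  have hd : RD p (sh + w) - sh ∈ Fp p := by
    by_cases hT : |xh + yh| ≤ |xh| ∧ |xh + yh| ≤ |yh|
    · obtain ⟨A, k, hA, hAb, hH⟩ := cancel_grid hxh hyh hT.1 hT.2
      have s1 : sh = xh + yh := by rw [hsh, RD_eq hp1 (sterbenz hp1 hxh hyh hT.1 hT.2)]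
      have s2 : a = xh := by rw [ha, s1, add_sub_cancel_right, RD_eq hp1 hxh]
      have s3 : b = yh := by rw [hb, s1, s2]; ring
      have s4 : sl = 0 := by
        rw [hsl, s2, s3, sub_self, sub_self, RD_eq hp1 (Fp_zero p), add_zero,
          RD_eq hp1 (Fp_zero p)]
      have s5 : w = v := by rw [hw, s4, zero_add, RD_eq hp1 hvF]
      obtain ⟨q, rfl⟩ := Nat.exists_eq_add_of_le' hp1
      have hkpos : (0 : ℝ) < 2 ^ k := by positivity
      have hq : (1 : ℝ) ≤ 2 ^ q := one_le_pow₀ (by norm_num)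
      have hqk : (1 : ℝ) * 2 ^ k ≤ 2 ^ q * 2 ^ k := by gcongr
      have hpq : (2 : ℝ) ^ (q + 1) * 2 ^ k = 2 * (2 ^ q * 2 ^ k) := by ring
      have hF : (2 : ℝ) ^ q * 2 ^ k ∈ Fp (q + 1) := by
        apply Fp_of_abs_le hp1 (N := 2 ^ q) (n := k)
        · push_cast; rfl
        · rw [abs_of_pos (by positivity)]; linarith
      have hwb : |w| ≤ 2 ^ q * 2 ^ k := by
        rw [s5, hv]; apply abs_RD_le hp1 hF; linarith
      obtain ⟨M, m, hM, hmk, hwm⟩ := Fp_reexpress (k := k) hwF (by linarith)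
      refine RD_add_sub_mem hp2 hM hmk (s1.trans hA) hwm ?_
      rw [← s1] at hAb
      linarith [abs_add_le sh w]
    · refine fast2Sum_mem hp2 hshF hwF ?_
      rw [hw]
      refine abs_w_le hp1 hu hu1 ?_ hl hsh ha hb hsl hv
      rw [not_and_or, not_le, not_le] at hT
      exact hT
  rw [RD_eq hp1 hd]
  have r1 := RD_le hp1 (w - (RD p (sh + w) - sh))
  have r2 : w ≤ sl + v := hw ▸ RD_le hp1 _
  have r3 : v ≤ xl + yl := hv ▸ RD_le hp1 _
  have r4 : sl ≤ RD p (xh - a) + RD p (yh - b) := hsl ▸ RD_le hp1 _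
  have r5 := RD_le hp1 (xh - a)
  have r6 := RD_le hp1 (yh - b)
  linarith

end

lemma sloppyAdd_RU (p : ℕ) (xh xl yh yl : ℝ) :
    sloppyAdd (RU p) xh xl yh yl = -sloppyAdd (RD p) (-xh) (-xl) (-yh) (-yl) := by
  have hadd : ∀ x y, RD p (-x + -y) = -RU p (x + y) := fun x y => by
    rw [RU_eq_neg_RD, neg_neg, neg_add]
  have hsub : ∀ x y, RD p (-x - -y) = -RU p (x - y) := fun x y => by
    rw [RU_eq_neg_RD, neg_neg]; congr 1; ring
  simp only [sloppyAdd, hadd, hsub, Prod.neg_mk, neg_neg]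

theorem sloppy_directed_rounding_error_sign
    (p : ℕ) (hp : 6 ≤ p) (u : ℝ) (hu : u = (2 : ℝ) ^ (1 - (p : ℤ)))
    (ox oy : ℝ) (hox1 : 1 ≤ ox) (hox2 : ox ≤ 1 / (8 * u) - 2)
    (hoy1 : 1 ≤ oy) (hoy2 : oy ≤ 1 / (8 * u) - 2)
    (xh xl yh yl : ℝ)
    (hxh : xh ∈ Fp p) (hxl : xl ∈ Fp p) (hyh : yh ∈ Fp p) (hyl : yl ∈ Fp p)
    (hovx : |xl| ≤ ox * u * |xh|) (hovy : |yl| ≤ oy * u * |yh|) :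
    (sloppyAdd (RD p) xh xl yh yl).1 + (sloppyAdd (RD p) xh xl yh yl).2 ≤
        xh + xl + yh + yl ∧
      xh + xl + yh + yl ≤
        (sloppyAdd (RU p) xh xl yh yl).1 + (sloppyAdd (RU p) xh xl yh yl).2 := by
  have hu0 : 0 < u := by rw [hu]; positivity
  have hup : u * 2 ^ p = 2 := by
    rw [hu, ← zpow_natCast, ← zpow_add₀ two_ne_zero]; simp
  have hu1 : u ≤ 1 / 32 := by
    have h64 : (64 : ℝ) ≤ 2 ^ p := by
      simpa [show (2 : ℝ) ^ 6 = 64 by norm_num] using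
        pow_le_pow_right₀ (by norm_num : (1 : ℝ) ≤ 2) hp
    nlinarith
  have hov : ∀ o : ℝ, o ≤ 1 / (8 * u) - 2 → o * u ≤ 1 / 8 := by
    intro o ho
    have h1 : o * u ≤ (1 / (8 * u) - 2) * u := by gcongr
    have h2 : (1 / (8 * u) - 2) * u = 1 / 8 - 2 * u := by field_simp
    linarith
  have hl : |xl + yl| ≤ 1 / 8 * (|xh| + |yh|) := by
    have h1 : ox * u * |xh| ≤ 1 / 8 * |xh| := by gcongr; exact hov _ hox2
    have h2 : oy * u * |yh| ≤ 1 / 8 * |yh| := by gcongr; exact hov _ hoy2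
    linarith [abs_add_le xl yl]
  refine ⟨sloppy_RD hp hup hu1 hxh hyh hl, ?_⟩
  have h := sloppy_RD (xl := -xl) (yl := -yl) hp hup hu1 (Fp_neg hxh) (Fp_neg hyh)
    (by rwa [← neg_add, abs_neg, abs_neg, abs_neg])
  rw [sloppyAdd_RU, Prod.fst_neg, Prod.snd_neg]
  linarith
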